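/- Let n ≥ 2 and set a := √(n−1) + 1. Let f ∈ C¹(ℝ) and let u be a W^{3,1}_loc(ℝⁿ) stable solution of div(∇u/√(1+|∇u|²)) = −f(u) in ℝⁿ which is radially symmetric with respect to the origin. Set z := |∇u|². Then there exists a dimensional constant C > 0 such that for all 0 < ρ < R: (1/ρ^{2a}) ∫_{B_ρ} z²/(1+z)^{3/2} dx ≤ (C/R^{2a}) ∫_{B_{2R}∖B_R} z/(1+z)^{3/2} dx. -/

import Mathlib

open MeasureTheory Metric Real Filter Asymptotics Bornology
open scoped RealInnerProductSpace Topology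

noncomputable section

/-- Euclidean space `ℝⁿ`. -/
abbrev Euc (n : ℕ) := EuclideanSpace ℝ (Fin n)

/-- `φ` is an admissible test function on `Ω`: smooth with compact support contained in `Ω`
(i.e. `φ ∈ C_c^∞(Ω)`). -/
def IsTestFun {n : ℕ} (Ω : Set (Euc n)) (φ : Euc n → ℝ) : Prop :=
  ContDiff ℝ (⊤ : ℕ∞) φ ∧ HasCompactSupport φ ∧ tsupport φ ⊆ Ω

/-- `u` is a weak solution of the mean curvature equation
`div(∇u/√(1+|∇u|²)) = -f(u)` in `Ω`:  `u ∈ W^{1,1}_loc(Ω)`, `f(u) ∈ L¹_loc(Ω)` and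
`∫_Ω ∇u·∇φ/√(1+|∇u|²) = ∫_Ω f(u) φ` for every `φ ∈ C_c^∞(Ω)`. -/
def IsWeakSolution {n : ℕ} (Ω : Set (Euc n)) (f : ℝ → ℝ) (u : Euc n → ℝ) : Prop :=
  LocallyIntegrableOn u Ω ∧
  LocallyIntegrableOn (fun x => ‖gradient u x‖) Ω ∧
  LocallyIntegrableOn (fun x => f (u x)) Ω ∧
  ∀ φ : Euc n → ℝ, IsTestFun Ω φ →
    ∫ x in Ω, ⟪gradient u x, gradient φ x⟫ / Real.sqrt (1 + ‖gradient u x‖ ^ 2)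
      = ∫ x in Ω, f (u x) * φ x

/-- `u` is a stable solution of `div(∇u/√(1+|∇u|²)) = -f(u)` in `Ω`: it is a weak solution,
`f'(u) ∈ L¹_loc(Ω)` and the second variation of the energy at `u` is nonnegative:
`∫_Ω f'(u) ξ² ≤ ∫_Ω (|∇ξ|²/√(1+|∇u|²) - (∇u·∇ξ)²/(1+|∇u|²)^{3/2})` for all `ξ ∈ C_c^∞(Ω)`. -/
def IsStableSolution {n : ℕ} (Ω : Set (Euc n)) (f : ℝ → ℝ) (u : Euc n → ℝ) : Prop :=
  IsWeakSolution Ω f u ∧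
  LocallyIntegrableOn (fun x => deriv f (u x)) Ω ∧
  ∀ ξ : Euc n → ℝ, IsTestFun Ω ξ →
    ∫ x in Ω, deriv f (u x) * ξ x ^ 2 ≤
      ∫ x in Ω, (‖gradient ξ x‖ ^ 2 / Real.sqrt (1 + ‖gradient u x‖ ^ 2)
        - ⟪gradient u x, gradient ξ x⟫ ^ 2 / (1 + ‖gradient u x‖ ^ 2) ^ ((3:ℝ)/2))

/-- A vector field `g` belongs to the Morrey space `M^p(Ω)`: there is `K > 0` with
`∫_{B_ρ(x₀) ∩ Ω} |g| ≤ K ρ^{n(1-1/p)}` for all `x₀ ∈ Ω` and `0 < ρ ≤ diam Ω`. -/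
def MemMorrey {n : ℕ} (Ω : Set (Euc n)) (p : ℝ) (g : Euc n → Euc n) : Prop :=
  ∃ K > (0:ℝ), ∀ x₀ ∈ Ω, ∀ ρ : ℝ, 0 < ρ → ρ ≤ Metric.diam Ω →
    ∫ x in Metric.ball x₀ ρ ∩ Ω, ‖g x‖ ≤ K * ρ ^ ((n : ℝ) * (1 - 1 / p))

/-!
Test stability with `ξ = (x · ∇u) H = r u_r H` for a radial weight `H`. Differentiating the radial
equation shows that the terms of the second variation containing `f'(u)` and `u_rr` form a total
derivative in `r`, and what remains is the Hardy-type inequality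
`0 ≤ ∫ z / (1 + z)^(3/2) * ((H + x · ∇H)² - (n - 1) (1 + z) H²)`.
For `H = (ρ² + |x|²)^(-a/2)` with `a = √(n - 1) + 1` one has `|H + x · ∇H| ≤ √(n - 1) H`, so the
integrand is at most `-(n - 1) H² z² / (1 + z)^(3/2)`. Cutting `H` off between `R` and `2R` costs
only the integral over the annulus, where `H² ≤ R^(-2a)`, while `H² ≥ (2ρ²)^(-a)` on `B_ρ`.
-/

section EulerDerivative

variable {E : Type*} [NormedAddCommGroup E] [NormedSpace ℝ E]

/-- The Euler derivative `x · ∇v = r ∂v/∂r`. -/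
def eulerDeriv (v : E → ℝ) (x : E) : ℝ := fderiv ℝ v x x

lemma contDiff_eulerDeriv {v : E → ℝ} {k l : WithTop ℕ∞} (hv : ContDiff ℝ l v) (hkl : k + 1 ≤ l) :
    ContDiff ℝ k (eulerDeriv v) :=
  (hv.fderiv_right hkl).clm_apply contDiff_id

lemma eulerDeriv_eq_zero_of_notMem_tsupport {v : E → ℝ} {x : E} (hx : x ∉ tsupport v) :
    eulerDeriv v x = 0 := by
  rw [eulerDeriv, fderiv_of_notMem_tsupport ℝ hx, zero_apply]

end EulerDerivative

section Gradient

variable {E : Type*} [NormedAddCommGroup E] [InnerProductSpace ℝ E] [CompleteSpace E]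

lemma norm_gradient (v : E → ℝ) (x : E) : ‖gradient v x‖ = ‖fderiv ℝ v x‖ :=
  (InnerProductSpace.toDual ℝ E).symm.norm_map _

lemma continuous_gradient {v : E → ℝ} (hv : ContDiff ℝ 1 v) : Continuous (gradient v) :=
  (InnerProductSpace.toDual ℝ E).symm.continuous.comp (hv.continuous_fderiv one_ne_zero)

lemma measurable_gradient [MeasurableSpace E] [BorelSpace E] (v : E → ℝ) :
    Measurable (gradient v) :=
  (InnerProductSpace.toDual ℝ E).symm.continuous.measurable.comp (measurable_fderiv ℝ v)

lemma gradient_eq_zero_of_notMem_tsupport {v : E → ℝ} {x : E} (hx : x ∉ tsupport v) :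
    gradient v x = 0 := by
  rw [gradient, fderiv_of_notMem_tsupport ℝ hx, map_zero]

end Gradient

section RadialCalculus

variable {E : Type*} [NormedAddCommGroup E] [InnerProductSpace ℝ E]

lemma hasFDerivAt_norm_of_ne_zero {x : E} (hx : x ≠ 0) :
    HasFDerivAt (fun y : E => ‖y‖) (‖x‖⁻¹ • innerSL ℝ x) x := by
  have hsqrt := (hasStrictFDerivAt_norm_sq x).hasFDerivAt.sqrt
    (pow_ne_zero 2 (norm_ne_zero_iff.2 hx))
  simp only [Real.sqrt_sq (norm_nonneg _)] at hsqrt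
  refine hsqrt.congr_fderiv ?_
  rw [← Nat.cast_smul_eq_nsmul ℝ, smul_smul]
  congr 1
  field_simp
  norm_num

lemma eulerDeriv_comp_norm {P : ℝ → ℝ} {x : E} (hP : DifferentiableAt ℝ P ‖x‖) :
    eulerDeriv (fun y : E => P ‖y‖) x = ‖x‖ * deriv P ‖x‖ := by
  rcases eq_or_ne x 0 with rfl | hx
  · simp [eulerDeriv]
  have hx' : ‖x‖ ≠ 0 := norm_ne_zero_iff.2 hx
  have hcomp : HasFDerivAt (fun y : E => P ‖y‖) _ x :=
    hP.hasDerivAt.comp_hasFDerivAt x (hasFDerivAt_norm_of_ne_zero hx)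
  rw [eulerDeriv, hcomp.fderiv, smul_apply, smul_apply, innerSL_apply_apply,
    real_inner_self_eq_norm_sq, smul_eq_mul, smul_eq_mul]
  field_simp

lemma eulerDeriv_comp_norm_sq {K : ℝ → ℝ} {k : ℝ} {x : E} (hK : HasDerivAt K k (‖x‖ ^ 2)) :
    eulerDeriv (fun y : E => K (‖y‖ ^ 2)) x = 2 * ‖x‖ ^ 2 * k := by
  have hcomp : HasFDerivAt (fun y : E => K (‖y‖ ^ 2)) _ x :=
    hK.comp_hasFDerivAt x (hasStrictFDerivAt_norm_sq x).hasFDerivAt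
  rw [eulerDeriv, hcomp.fderiv, smul_apply, smul_apply, innerSL_apply_apply,
    real_inner_self_eq_norm_sq, smul_eq_mul, nsmul_eq_mul, Nat.cast_ofNat]
  ring

variable [CompleteSpace E]

lemma hasGradientAt_comp_norm {P : ℝ → ℝ} {p : ℝ} {x : E} (hx : x ≠ 0)
    (hP : HasDerivAt P p ‖x‖) : HasGradientAt (fun y => P ‖y‖) ((p / ‖x‖) • x) x := by
  rw [hasGradientAt_iff_hasFDerivAt]
  refine (hP.comp_hasFDerivAt x (hasFDerivAt_norm_of_ne_zero hx)).congr_fderiv ?_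
  ext y
  simp [div_eq_mul_inv, mul_assoc]

lemma inner_gradient_comp_norm {P Q : ℝ → ℝ} {p q : ℝ} {x : E} (hx : x ≠ 0)
    (hP : HasDerivAt P p ‖x‖) (hQ : HasDerivAt Q q ‖x‖) :
    ⟪gradient (fun y : E => P ‖y‖) x, gradient (fun y : E => Q ‖y‖) x⟫ = p * q := by
  have hx' : ‖x‖ ≠ 0 := norm_ne_zero_iff.2 hx
  rw [(hasGradientAt_comp_norm hx hP).gradient, (hasGradientAt_comp_norm hx hQ).gradient,
    real_inner_smul_left, real_inner_smul_right, real_inner_self_eq_norm_sq]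
  field_simp

lemma norm_sq_gradient_comp_norm {P : ℝ → ℝ} {p : ℝ} {x : E} (hx : x ≠ 0)
    (hP : HasDerivAt P p ‖x‖) : ‖gradient (fun y : E => P ‖y‖) x‖ ^ 2 = p ^ 2 := by
  rw [← real_inner_self_eq_norm_sq, inner_gradient_comp_norm hx hP hP, sq]

end RadialCalculus

section PolarCoordinates

variable {E : Type*} [NormedAddCommGroup E] [NormedSpace ℝ E] [FiniteDimensional ℝ E]
  [Nontrivial E] [MeasurableSpace E] (μ : Measure E) [μ.IsAddHaarMeasure]

lemma finrank_mul_measureReal_unitBall_pos :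
    0 < Module.finrank ℝ E * μ.real (ball (0 : E) 1) :=
  mul_pos (Nat.cast_pos.2 Module.finrank_pos)
    (ENNReal.toReal_pos (measure_ball_pos μ 0 one_pos).ne' measure_ball_lt_top.ne)

lemma integral_eq_of_eq_comp_norm [BorelSpace E] {H : E → ℝ} {F : ℝ → ℝ}
    (hHF : ∀ x, x ≠ 0 → H x = F ‖x‖) :
    ∫ x, H x ∂μ = Module.finrank ℝ E * μ.real (ball 0 1) *
      ∫ r in Set.Ioi (0 : ℝ), r ^ (Module.finrank ℝ E - 1) * F r := by
  have hae : H =ᵐ[μ] fun x => F ‖x‖ := by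
    filter_upwards [μ.ae_ne 0] with x hx using hHF x hx
  rw [integral_congr_ae hae, integral_fun_norm_addHaar μ F]
  simp only [nsmul_eq_mul, smul_eq_mul, mul_assoc]

end PolarCoordinates

section Mollification

open ContinuousLinearMap (lsmul)

variable {E F : Type*} [NormedAddCommGroup E] [NormedSpace ℝ E] [FiniteDimensional ℝ E]
  [NormedAddCommGroup F] [NormedSpace ℝ F]

section Convolution

variable [MeasurableSpace E] [BorelSpace E] (μ : Measure E) [μ.IsAddHaarMeasure]

lemma hasFDerivAt_normed_convolution (β : ContDiffBump (0 : E)) {ξ : E → F}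
    (hξ : ContDiff ℝ 1 ξ) (hc : HasCompactSupport ξ) (x : E) :
    HasFDerivAt (convolution (β.normed μ) ξ (lsmul ℝ ℝ) μ)
      (convolution (β.normed μ) (fderiv ℝ ξ) (lsmul ℝ ℝ) μ x) x :=
  hc.hasFDerivAt_convolution_right (lsmul ℝ ℝ) β.continuous_normed.locallyIntegrable hξ x

lemma tsupport_normed_convolution_subset (β : ContDiffBump (0 : E)) (ξ : E → F) :
    tsupport (convolution (β.normed μ) ξ (lsmul ℝ ℝ) μ) ⊆ cthickening β.rOut (tsupport ξ) := by
  refine closure_minimal ((support_convolution_subset _).trans ?_) isClosed_cthickening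
  rw [β.support_normed_eq]
  rintro _ ⟨y, hy, x, hx, rfl⟩
  refine mem_cthickening_of_dist_le _ x _ _ (subset_tsupport ξ hx) ?_
  simpa using (mem_ball.1 hy).le

end Convolution

lemma exists_contDiff_dist_fderiv_le [CompleteSpace F] {ξ : E → F} (hξ : ContDiff ℝ 1 ξ)
    (hc : HasCompactSupport ξ) {δ ε : ℝ} (hδ : 0 < δ) (hε : 0 < ε) :
    ∃ φ : E → F, ContDiff ℝ (⊤ : ℕ∞) φ ∧ tsupport φ ⊆ cthickening δ (tsupport ξ) ∧
      ∀ x, dist (φ x) (ξ x) ≤ ε ∧ dist (fderiv ℝ φ x) (fderiv ℝ ξ x) ≤ ε := by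
  borelize E
  have hdξ : Continuous (fderiv ℝ ξ) := hξ.continuous_fderiv one_ne_zero
  obtain ⟨δ₀, hδ₀, hξ_close⟩ :=
    Metric.uniformContinuous_iff.1 (hc.uniformContinuous_of_continuous hξ.continuous) ε hε
  obtain ⟨δ₁, hδ₁, hdξ_close⟩ :=
    Metric.uniformContinuous_iff.1 ((hc.fderiv ℝ).uniformContinuous_of_continuous hdξ) ε hε
  obtain ⟨η, hη, hη_lt⟩ : ∃ η > 0, η < min δ (min δ₀ δ₁) := exists_between (by positivity)
  simp only [lt_min_iff] at hη_lt
  let β : ContDiffBump (0 : E) := ⟨η / 2, η, half_pos hη, half_lt_self hη⟩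
  refine ⟨convolution (β.normed .addHaar) ξ (lsmul ℝ ℝ) .addHaar,
    β.hasCompactSupport_normed.contDiff_convolution_left _ β.contDiff_normed
      hξ.continuous.locallyIntegrable,
    (tsupport_normed_convolution_subset _ β ξ).trans (cthickening_mono hη_lt.1.le _),
    fun x => ⟨?_, ?_⟩⟩
  · exact β.dist_normed_convolution_le hξ.continuous.aestronglyMeasurable
      fun y hy => (hξ_close ((mem_ball.1 hy).trans hη_lt.2.1)).le
  · rw [(hasFDerivAt_normed_convolution _ β hξ hc x).fderiv]
    exact β.dist_normed_convolution_le hdξ.aestronglyMeasurable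
      fun y hy => (hdξ_close ((mem_ball.1 hy).trans hη_lt.2.2)).le

end Mollification

section AreaHessian

lemma rpow_three_halves {x : ℝ} (hx : 0 ≤ x) : x ^ ((3 : ℝ) / 2) = √x ^ 3 := by
  rw [Real.sqrt_eq_rpow, ← Real.rpow_mul_natCast hx]
  norm_num

lemma sq_rpow_neg {r : ℝ} (hr : 0 ≤ r) (a : ℝ) : (r ^ 2) ^ (-a) = (r ^ (2 * a))⁻¹ := by
  rw [Real.rpow_neg (sq_nonneg r), ← Real.rpow_natCast_mul hr, Nat.cast_ofNat]

variable {E : Type*} [NormedAddCommGroup E] [InnerProductSpace ℝ E]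

/-- The Hessian of the area integrand `p ↦ √(1 + ‖p‖²)` at `p`, as a quadratic form in `v`; for
`p = ∇u` and `v = ∇ξ` it is the integrand of the second variation of area. -/
def areaHessian (p v : E) : ℝ :=
  ‖v‖ ^ 2 / √(1 + ‖p‖ ^ 2) - ⟪p, v⟫ ^ 2 / (1 + ‖p‖ ^ 2) ^ ((3 : ℝ) / 2)

lemma areaHessian_zero_right (p : E) : areaHessian p 0 = 0 := by
  simp [areaHessian]

lemma continuous_areaHessian : Continuous fun q : E × E => areaHessian q.1 q.2 := by
  unfold areaHessian
  refine (by fun_prop : Continuous fun q : E × E => ‖q.2‖ ^ 2).div (by fun_prop)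
    (fun q => by positivity) |>.sub <| .div (by fun_prop) ?_ fun q => by positivity
  exact (by fun_prop : Continuous fun q : E × E => 1 + ‖q.1‖ ^ 2).rpow_const
    fun q => .inl (by positivity)

lemma continuous_areaHessian_right (p : E) : Continuous (areaHessian p) :=
  continuous_areaHessian.comp (Continuous.prodMk_right p)

lemma measurable_areaHessian {α : Type*} [MeasurableSpace α] [MeasurableSpace E] [BorelSpace E]
    [SecondCountableTopology E] {p v : α → E} (hp : Measurable p) (hv : Measurable v) :
    Measurable fun x => areaHessian (p x) (v x) :=
  continuous_areaHessian.measurable.comp (hp.prodMk hv)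

lemma areaHessian_gradient_comp_norm [CompleteSpace E] {P Q : ℝ → ℝ} {p q : ℝ} {x : E}
    (hx : x ≠ 0) (hP : HasDerivAt P p ‖x‖) (hQ : HasDerivAt Q q ‖x‖) :
    areaHessian (gradient (fun y : E => P ‖y‖) x) (gradient (fun y : E => Q ‖y‖) x) =
      q ^ 2 / √(1 + p ^ 2) ^ 3 := by
  have hS_sq : √(1 + p ^ 2) ^ 2 = 1 + p ^ 2 := Real.sq_sqrt (by positivity)
  rw [areaHessian, norm_sq_gradient_comp_norm hx hP, norm_sq_gradient_comp_norm hx hQ,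
    inner_gradient_comp_norm hx hP hQ, rpow_three_halves (by positivity)]
  field_simp
  linear_combination q ^ 2 * hS_sq

lemma abs_areaHessian_le (p v : E) : |areaHessian p v| ≤ ‖v‖ ^ 2 := by
  have hS : 1 ≤ √(1 + ‖p‖ ^ 2) := Real.one_le_sqrt.2 (by nlinarith [sq_nonneg ‖p‖])
  have hS_sq : √(1 + ‖p‖ ^ 2) ^ 2 = 1 + ‖p‖ ^ 2 := Real.sq_sqrt (by positivity)
  rw [areaHessian, rpow_three_halves (by positivity)]
  set S := √(1 + ‖p‖ ^ 2)
  have cauchy_schwarz : ⟪p, v⟫ ^ 2 ≤ S ^ 2 * ‖v‖ ^ 2 := by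
    nlinarith [sq_abs ⟪p, v⟫, abs_real_inner_le_norm p v, abs_nonneg ⟪p, v⟫,
      sq_nonneg ‖v‖, mul_nonneg (norm_nonneg p) (norm_nonneg v)]
  have lower : ⟪p, v⟫ ^ 2 / S ^ 3 ≤ ‖v‖ ^ 2 / S := by
    rw [div_le_div_iff₀ (by positivity) (by positivity)]
    nlinarith [mul_le_mul_of_nonneg_right cauchy_schwarz (by positivity : 0 ≤ S)]
  have upper : ‖v‖ ^ 2 / S ≤ ‖v‖ ^ 2 := div_le_self (by positivity) hS
  rw [abs_of_nonneg (sub_nonneg.2 lower)]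
  exact (sub_le_self _ (by positivity)).trans upper

end AreaHessian

section StabilityOnC1

variable {n : ℕ} {Ω : Set (Euc n)}

lemma exists_testFun_seq_tendsto (hΩ : IsOpen Ω) {ξ : Euc n → ℝ} (hξ : ContDiff ℝ 1 ξ)
    (hc : HasCompactSupport ξ) (hsupp : tsupport ξ ⊆ Ω) :
    ∃ (φ : ℕ → Euc n → ℝ) (K : Set (Euc n)) (B : ℝ), IsCompact K ∧ K ⊆ Ω ∧
      (∀ k, IsTestFun Ω (φ k) ∧ tsupport (φ k) ⊆ K ∧
        ∀ x, ‖φ k x‖ ≤ B ∧ ‖gradient (φ k) x‖ ≤ B) ∧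
      ∀ x, Tendsto (fun k => φ k x) atTop (𝓝 (ξ x)) ∧
        Tendsto (fun k => gradient (φ k) x) atTop (𝓝 (gradient ξ x)) := by
  obtain ⟨δ, hδ, hδΩ⟩ := hc.isCompact.exists_cthickening_subset_open hΩ hsupp
  have hK : IsCompact (cthickening δ (tsupport ξ)) := hc.isCompact.cthickening
  choose φ hφ hφK hφξ using fun k : ℕ =>
    exists_contDiff_dist_fderiv_le hξ hc hδ (Nat.one_div_pos_of_nat (α := ℝ) (n := k))
  obtain ⟨B₀, hB₀⟩ := hc.exists_bound_of_continuous hξ.continuous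
  obtain ⟨B₁, hB₁⟩ :=
    (hc.fderiv ℝ).exists_bound_of_continuous (hξ.continuous_fderiv one_ne_zero)
  have hone (k : ℕ) : 1 / ((k : ℝ) + 1) ≤ 1 :=
    div_le_one_of_le₀ (by linarith [k.cast_nonneg (α := ℝ)]) (by positivity)
  have hlim := tendsto_one_div_add_atTop_nhds_zero_nat (𝕜 := ℝ)
  refine ⟨φ, _, max B₀ B₁ + 1, hK, hδΩ,
    fun k => ⟨⟨hφ k, hK.of_isClosed_subset (isClosed_tsupport _) (hφK k), (hφK k).trans hδΩ⟩,
      hφK k, fun x => ⟨?_, ?_⟩⟩, fun x => ⟨?_, ?_⟩⟩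
  · linarith [norm_le_norm_add_norm_sub' (φ k x) (ξ x), dist_eq_norm (φ k x) (ξ x),
      (hφξ k x).1, hB₀ x, le_max_left B₀ B₁, hone k]
  · rw [norm_gradient]
    linarith [norm_le_norm_add_norm_sub' (fderiv ℝ (φ k) x) (fderiv ℝ ξ x),
      dist_eq_norm (fderiv ℝ (φ k) x) (fderiv ℝ ξ x), (hφξ k x).2, hB₁ x,
      le_max_right B₀ B₁, hone k]
  · exact tendsto_iff_dist_tendsto_zero.2
      (squeeze_zero (fun _ => dist_nonneg) (fun k => (hφξ k x).1) hlim)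
  · exact ((InnerProductSpace.toDual ℝ (Euc n)).symm.continuous.tendsto _).comp
      (tendsto_iff_dist_tendsto_zero.2
        (squeeze_zero (fun _ => dist_nonneg) (fun k => (hφξ k x).2) hlim))

lemma tendsto_setIntegral_of_dominated_on {α : Type*} [MeasurableSpace α] {μ : Measure α}
    {K s : Set α} {Φ : ℕ → α → ℝ} {Φ₀ b : α → ℝ} (hK : MeasurableSet K)
    (hb : IntegrableOn b K μ) (hΦ : ∀ k, AEStronglyMeasurable (Φ k) (μ.restrict s))
    (hle : ∀ k, ∀ x ∈ K, ‖Φ k x‖ ≤ b x) (hzero : ∀ k, ∀ x ∉ K, Φ k x = 0)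
    (hlim : ∀ x, Tendsto (fun k => Φ k x) atTop (𝓝 (Φ₀ x))) :
    Tendsto (fun k => ∫ x in s, Φ k x ∂μ) atTop (𝓝 (∫ x in s, Φ₀ x ∂μ)) := by
  refine tendsto_integral_of_dominated_convergence (K.indicator b) hΦ
    (hb.integrable_indicator hK).integrableOn (fun k => ae_of_all _ fun x => ?_)
    (ae_of_all _ hlim)
  by_cases hx : x ∈ K
  · rw [Set.indicator_of_mem hx]
    exact hle k x hx
  · rw [Set.indicator_of_notMem hx, hzero k x hx, norm_zero]

lemma IsStableSolution.le_of_contDiff_one {f : ℝ → ℝ} {u ξ : Euc n → ℝ}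
    (hs : IsStableSolution Ω f u) (hΩ : IsOpen Ω) (hξ : ContDiff ℝ 1 ξ)
    (hc : HasCompactSupport ξ) (hsupp : tsupport ξ ⊆ Ω) :
    ∫ x in Ω, deriv f (u x) * ξ x ^ 2 ≤
      ∫ x in Ω, areaHessian (gradient u x) (gradient ξ x) := by
  obtain ⟨-, hf', hstable⟩ := hs
  obtain ⟨φ, K, B, hK, hKΩ, hφ, hlim⟩ := exists_testFun_seq_tendsto hΩ hξ hc hsupp
  have potential_tendsto : Tendsto (fun k => ∫ x in Ω, deriv f (u x) * φ k x ^ 2) atTop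
      (𝓝 (∫ x in Ω, deriv f (u x) * ξ x ^ 2)) := by
    refine tendsto_setIntegral_of_dominated_on (b := fun x => ‖deriv f (u x)‖ * B ^ 2)
      hK.measurableSet ((hf'.integrableOn_compact_subset hKΩ hK).norm.mul_const (B ^ 2))
      (fun k => hf'.aestronglyMeasurable.mul ((hφ k).1.1.continuous.pow 2).aestronglyMeasurable)
      (fun k x _ => ?_) (fun k x hx => ?_) fun x => ((hlim x).1.pow 2).const_mul _
    · rw [norm_mul, norm_pow]
      gcongr
      exact ((hφ k).2.2 x).1
    · simp [image_eq_zero_of_notMem_tsupport fun h => hx ((hφ k).2.1 h)]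
  have hessian_tendsto : Tendsto
      (fun k => ∫ x in Ω, areaHessian (gradient u x) (gradient (φ k) x)) atTop
      (𝓝 (∫ x in Ω, areaHessian (gradient u x) (gradient ξ x))) := by
    refine tendsto_setIntegral_of_dominated_on (b := fun _ => B ^ 2)
      hK.measurableSet (integrableOn_const hK.measure_lt_top.ne)
      (fun k => (measurable_areaHessian (measurable_gradient u)
        (measurable_gradient (φ k))).aestronglyMeasurable)
      (fun k x _ => ?_) (fun k x hx => ?_)
      fun x => ((continuous_areaHessian_right (gradient u x)).tendsto _).comp (hlim x).2
    · exact (abs_areaHessian_le _ _).trans (by gcongr; exact ((hφ k).2.2 x).2)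
    · rw [gradient_eq_zero_of_notMem_tsupport fun h => hx ((hφ k).2.1 h), areaHessian_zero_right]
  exact le_of_tendsto_of_tendsto' potential_tendsto hessian_tendsto fun k => hstable _ (hφ k).1

end StabilityOnC1

section RadialEquation

variable {n : ℕ} {ψ G : ℝ → ℝ}

lemma exists_contDiff_eq_comp_norm [NeZero n] {v : Euc n → ℝ} {g : ℝ → ℝ} {k : WithTop ℕ∞}
    (hv : ContDiff ℝ k v) (hg : ∀ x, v x = g ‖x‖) :
    ∃ G : ℝ → ℝ, ContDiff ℝ k G ∧ (HasCompactSupport v → HasCompactSupport G) ∧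
      v = fun x => G ‖x‖ := by
  obtain ⟨e, he⟩ := exists_norm_eq (Euc n) zero_le_one
  have hline : Isometry fun t : ℝ => t • e :=
    .of_dist_eq fun s t => by rw [dist_eq_norm, ← sub_smul, norm_smul, he, mul_one, dist_eq_norm]
  refine ⟨fun t => v (t • e), hv.comp (by fun_prop),
    fun hc => hc.comp_isClosedEmbedding hline.isClosedEmbedding, funext fun x => ?_⟩
  simp only [hg, norm_smul, he, mul_one, norm_norm]

lemma isTestFun_comp_norm (hψ : ContDiff ℝ (⊤ : ℕ∞) ψ) (hc : HasCompactSupport ψ)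
    (hsupp : tsupport ψ ⊆ Set.Ioi 0) :
    IsTestFun Set.univ fun x : Euc n => ψ ‖x‖ := by
  refine ⟨contDiff_iff_contDiffAt.2 fun x => ?_, ?_, Set.subset_univ _⟩
  · rcases eq_or_ne x 0 with rfl | hx
    · have hzero : ψ =ᶠ[𝓝 ‖(0 : Euc n)‖] 0 :=
        notMem_tsupport_iff_eventuallyEq.1 fun h => by simpa using hsupp h
      exact contDiffAt_const.congr_of_eventuallyEq
        (hzero.comp_tendsto (continuous_norm.tendsto (0 : Euc n)))
    · exact hψ.contDiffAt.comp x (contDiffAt_norm ℝ hx)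
  · obtain ⟨b, hb⟩ := hc.isCompact.isBounded.subset_closedBall 0
    refine .intro (isCompact_closedBall (0 : Euc n) b) fun x hx => ?_
    refine image_eq_zero_of_notMem_tsupport fun h => hx ?_
    simpa using hb h

/-- The derivative of the one-dimensional area integrand `t ↦ √(1 + t²)`. -/
def areaFlux (t : ℝ) : ℝ := t / √(1 + t ^ 2)

lemma hasDerivAt_areaFlux (t : ℝ) : HasDerivAt areaFlux (1 / √(1 + t ^ 2) ^ 3) t := by
  have hS_sq : √(1 + t ^ 2) ^ 2 = 1 + t ^ 2 := Real.sq_sqrt (by positivity)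
  have hsqrt := (((hasDerivAt_id t).pow 2).const_add 1).sqrt
    (by simp only [Pi.pow_apply, id]; positivity)
  refine ((hasDerivAt_id t).div hsqrt (by simp only [Pi.pow_apply, id]; positivity)).congr_deriv ?_
  simp only [id, Pi.pow_apply]
  field_simp
  linear_combination 2 * hS_sq

lemma contDiff_areaFlux {k : ℕ∞} : ContDiff ℝ k areaFlux :=
  contDiff_id.div ((contDiff_const.add (contDiff_id.pow 2)).sqrt fun t => by positivity)
    fun t => by positivity

lemma IsWeakSolution.integral_radial [NeZero n] {f : ℝ → ℝ}
    (hs : IsWeakSolution Set.univ f fun x : Euc n => G ‖x‖) (hG : Differentiable ℝ G)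
    (hψ : ContDiff ℝ (⊤ : ℕ∞) ψ) (hc : HasCompactSupport ψ) (hsupp : tsupport ψ ⊆ Set.Ioi 0) :
    ∫ r, r ^ (n - 1) * areaFlux (deriv G r) * deriv ψ r = ∫ r, r ^ (n - 1) * f (G r) * ψ r := by
  have hdψ : Differentiable ℝ ψ := hψ.differentiable (by simp)
  have weak := hs.2.2.2 _ (isTestFun_comp_norm hψ hc hsupp)
  rw [setIntegral_univ, setIntegral_univ,
    integral_eq_of_eq_comp_norm (F := fun r => areaFlux (deriv G r) * deriv ψ r) volume,
    integral_eq_of_eq_comp_norm (F := fun r => f (G r) * ψ r) volume,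
    mul_right_inj' (finrank_mul_measureReal_unitBall_pos volume).ne',
    finrank_euclideanSpace_fin] at weak
  · simp only [← mul_assoc] at weak
    rwa [setIntegral_eq_integral_of_forall_compl_eq_zero,
      setIntegral_eq_integral_of_forall_compl_eq_zero] at weak
    · intro r hr
      rw [image_eq_zero_of_notMem_tsupport fun h => hr (hsupp h), mul_zero]
    · intro r hr
      rw [image_eq_zero_of_notMem_tsupport fun h => hr (hsupp (tsupport_deriv_subset h)), mul_zero]
  · exact fun x _ => rfl
  · intro x hx
    rw [inner_gradient_comp_norm hx (hG _).hasDerivAt (hdψ _).hasDerivAt,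
      norm_sq_gradient_comp_norm hx (hG _).hasDerivAt, areaFlux]
    ring

lemma deriv_eq_neg_of_forall_integral_mul_deriv_eq {s : Set ℝ} {Q F : ℝ → ℝ} (hs : IsOpen s)
    (hQ : ContDiff ℝ 1 Q) (hF : Continuous F)
    (h : ∀ ψ : ℝ → ℝ, ContDiff ℝ (⊤ : ℕ∞) ψ → HasCompactSupport ψ → tsupport ψ ⊆ s →
      ∫ r, Q r * deriv ψ r = ∫ r, F r * ψ r) :
    Set.EqOn (deriv Q) (fun r => -F r) s := by
  have hdQ : Continuous (deriv Q) := hQ.continuous_deriv le_rfl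
  have hsum : Continuous fun r => deriv Q r + F r := hdQ.add hF
  have hae : ∀ᵐ r, r ∈ s → deriv Q r + F r = 0 := by
    refine hs.ae_eq_zero_of_integral_contDiff_smul_eq_zero
      (hsum.locallyIntegrable.locallyIntegrableOn s) fun ψ hψ hc hsupp => ?_
    have hdψ : Continuous (deriv ψ) := hψ.continuous_deriv (by simp)
    have int_dQ : Integrable fun r => deriv Q r * ψ r :=
      (hdQ.mul hψ.continuous).integrable_of_hasCompactSupport hc.mul_left
    have int_F : Integrable fun r => F r * ψ r :=
      (hF.mul hψ.continuous).integrable_of_hasCompactSupport hc.mul_left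
    have by_parts : ∫ r, Q r * deriv ψ r = -∫ r, deriv Q r * ψ r :=
      integral_mul_deriv_eq_deriv_mul_of_integrable
        (fun r _ => (hQ.differentiable one_ne_zero r).hasDerivAt)
        (fun r _ => (hψ.differentiable (by simp) r).hasDerivAt)
        ((hQ.continuous.mul hdψ).integrable_of_hasCompactSupport hc.deriv.mul_left) int_dQ
        ((hQ.continuous.mul hψ.continuous).integrable_of_hasCompactSupport hc.mul_left)
    simp only [smul_eq_mul, mul_comm (ψ _), add_mul]
    rw [integral_add int_dQ int_F, ← h ψ hψ hc hsupp, by_parts, add_neg_cancel]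
  have heq : Set.EqOn (fun r => deriv Q r + F r) 0 s :=
    Measure.eqOn_open_of_ae_eq (μ := volume) ((ae_restrict_iff' hs.measurableSet).2 hae) hs
      hsum.continuousOn continuousOn_const
  exact fun r hr => eq_neg_of_add_eq_zero_left (heq hr)

lemma IsWeakSolution.deriv_areaFlux_eq [NeZero n] {f : ℝ → ℝ}
    (hs : IsWeakSolution Set.univ f fun x : Euc n => G ‖x‖) (hf : Continuous f)
    (hG : ContDiff ℝ 2 G) {r : ℝ} (hr : 0 < r) :
    deriv (fun t => areaFlux (deriv G t)) r =
      -f (G r) - (n - 1) / r * areaFlux (deriv G r) := by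
  obtain ⟨m, rfl⟩ : ∃ m, n = m + 1 := Nat.exists_eq_succ_of_ne_zero (NeZero.ne n)
  have hp : ContDiff ℝ 1 fun t => areaFlux (deriv G t) :=
    contDiff_areaFlux.comp (hG.deriv' (n := 1))
  have divergence_form := deriv_eq_neg_of_forall_integral_mul_deriv_eq isOpen_Ioi
    (Q := fun t => t ^ m * areaFlux (deriv G t)) ((contDiff_id.pow m).mul hp)
    ((continuous_pow m).mul (hf.comp hG.continuous))
    (fun ψ hψ hc hsupp => hs.integral_radial (hG.differentiable two_ne_zero) hψ hc hsupp) hr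
  have product_rule := (hasDerivAt_pow m r).fun_mul (hp.differentiable one_ne_zero r).hasDerivAt
  rw [product_rule.deriv] at divergence_form
  simp only [Function.comp_apply, Pi.mul_apply] at divergence_form
  rcases m with - | k
  · simpa using divergence_form
  · push_cast [Nat.add_sub_cancel] at divergence_form ⊢
    field_simp
    have hk : r ^ k ≠ 0 := pow_ne_zero k hr.ne'
    apply mul_left_cancel₀ hk
    linear_combination divergence_form

end RadialEquation

section HardyIdentity

variable {n : ℕ} {f G h : ℝ → ℝ}

/-- The integrand of the weighted Hardy-type inequality which stability of `u` yields for the test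
function `ξ = (x · ∇u) H`. -/
def hardyDensity (u H : Euc n → ℝ) (x : Euc n) : ℝ :=
  ‖gradient u x‖ ^ 2 / √(1 + ‖gradient u x‖ ^ 2) ^ 3 *
    ((H x + eulerDeriv H x) ^ 2 - (n - 1) * (1 + ‖gradient u x‖ ^ 2) * H x ^ 2)

lemma IsWeakSolution.hasDerivAt_deriv_areaFlux [NeZero n]
    (hs : IsWeakSolution Set.univ f fun x : Euc n => G ‖x‖) (hf : ContDiff ℝ 1 f)
    (hG : ContDiff ℝ 2 G) {r : ℝ} (hr : 0 < r) :
    HasDerivAt (deriv fun t => areaFlux (deriv G t))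
      (-(deriv f (G r) * deriv G r) + (n - 1) / r ^ 2 * areaFlux (deriv G r) -
        (n - 1) / r * deriv (fun t => areaFlux (deriv G t)) r) r := by
  have hflux : Differentiable ℝ fun t => areaFlux (deriv G t) :=
    (contDiff_areaFlux.comp (hG.deriv' (n := 1))).differentiable one_ne_zero
  have hfG : HasDerivAt (fun t => f (G t)) (deriv f (G r) * deriv G r) r :=
    (hf.differentiable one_ne_zero _).hasDerivAt.comp r
      (hG.differentiable two_ne_zero r).hasDerivAt
  have hcoeff := (hasDerivAt_inv hr.ne').const_mul ((n : ℝ) - 1)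
  refine ((hfG.neg.sub (hcoeff.mul (hflux r).hasDerivAt)).congr_of_eventuallyEq ?_).congr_deriv ?_
  · filter_upwards [Ioi_mem_nhds hr] with t ht
    exact hs.deriv_areaFlux_eq hf.continuous hG ht
  · ring

lemma deriv_areaFlux_deriv (hG : ContDiff ℝ 2 G) (r : ℝ) :
    deriv (fun t => areaFlux (deriv G t)) r = deriv (deriv G) r / √(1 + deriv G r ^ 2) ^ 3 := by
  have hw := ((hG.deriv' (n := 1)).differentiable one_ne_zero r).hasDerivAt
  refine ((hasDerivAt_areaFlux (deriv G r)).comp r hw).deriv.trans ?_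
  ring

lemma hasDerivAt_mul_deriv_mul (hG : ContDiff ℝ 2 G) (hh : Differentiable ℝ h) (r : ℝ) :
    HasDerivAt (fun t => t * deriv G t * h t)
      (deriv G r * (h r + r * deriv h r) + r * deriv (deriv G) r * h r) r := by
  have hw := ((hG.deriv' (n := 1)).differentiable one_ne_zero r).hasDerivAt
  refine (((hasDerivAt_id r).mul hw).mul (hh r).hasDerivAt).congr_deriv ?_
  simp only [Pi.mul_apply, id]
  ring

/-- For a radial solution `u = G(|x|)`, a radial weight `H = h(|x|)` and `ξ = (x · ∇u) H`, the
second variation integrand at `ξ` minus `hardyDensity u H`, as a function of `r = |x|`. -/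
def radialDefect (n : ℕ) (f G h : ℝ → ℝ) (r : ℝ) : ℝ :=
  deriv (fun t => t * deriv G t * h t) r ^ 2 / √(1 + deriv G r ^ 2) ^ 3 -
    deriv f (G r) * (r * deriv G r * h r) ^ 2 -
    deriv G r ^ 2 / √(1 + deriv G r ^ 2) ^ 3 *
      ((h r + r * deriv h r) ^ 2 - (n - 1) * (1 + deriv G r ^ 2) * h r ^ 2)

lemma IsWeakSolution.hasDerivAt_boundaryTerm [NeZero n]
    (hs : IsWeakSolution Set.univ f fun x : Euc n => G ‖x‖) (hf : ContDiff ℝ 1 f)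
    (hG : ContDiff ℝ 2 G) (hh : Differentiable ℝ h) {r : ℝ} (hr : 0 < r) :
    HasDerivAt
      (fun t => t ^ (n + 1) * deriv (fun t => areaFlux (deriv G t)) t * deriv G t * h t ^ 2)
      (r ^ (n - 1) * radialDefect n f G h r) r := by
  obtain ⟨m, rfl⟩ : ∃ m, n = m + 1 := Nat.exists_eq_succ_of_ne_zero (NeZero.ne n)
  have hw := ((hG.deriv' (n := 1)).differentiable one_ne_zero r).hasDerivAt
  have hS_sq : √(1 + deriv G r ^ 2) ^ 2 = 1 + deriv G r ^ 2 := Real.sq_sqrt (by positivity)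
  have hS : √(1 + deriv G r ^ 2) ≠ 0 := by positivity
  refine ((((hasDerivAt_pow _ r).mul (hs.hasDerivAt_deriv_areaFlux hf hG hr)).mul hw).mul
    ((hh r).hasDerivAt.pow 2)).congr_deriv ?_
  simp only [radialDefect, (hasDerivAt_mul_deriv_mul hG hh r).deriv, Pi.mul_apply, Pi.pow_apply,
    deriv_areaFlux_deriv hG]
  simp only [areaFlux]
  generalize √(1 + deriv G r ^ 2) = S at hS hS_sq
  rw [← hS_sq]
  push_cast [Nat.add_sub_cancel]
  field_simp
  ring

lemma integral_Ioi_eq_zero_of_hasDerivAt {T T' : ℝ → ℝ} (hT : Continuous T) (hT0 : T 0 = 0)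
    (hderiv : ∀ r > 0, HasDerivAt T (T' r) r) (hT' : Continuous T') (hc : HasCompactSupport T)
    (hc' : HasCompactSupport T') : ∫ r in Set.Ioi (0 : ℝ), T' r = 0 := by
  have hlim : Tendsto T atTop (𝓝 0) :=
    (hc.is_zero_at_infty).mono_left atTop_le_cocompact
  rw [integral_Ioi_of_hasDerivAt_of_tendsto hT.continuousWithinAt hderiv
    (hT'.integrable_of_hasCompactSupport hc').integrableOn hlim, hT0, sub_zero]

lemma IsWeakSolution.integral_radialDefect_eq_zero [NeZero n]
    (hs : IsWeakSolution Set.univ f fun x : Euc n => G ‖x‖) (hf : ContDiff ℝ 1 f)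
    (hG : ContDiff ℝ 2 G) (hh : ContDiff ℝ 1 h) (hc : HasCompactSupport h) :
    ∫ r in Set.Ioi (0 : ℝ), r ^ (n - 1) * radialDefect n f G h r = 0 := by
  have hw : ContDiff ℝ 1 (deriv G) := hG.deriv'
  have hflux : Continuous (deriv fun t => areaFlux (deriv G t)) :=
    (contDiff_areaFlux.comp hw).continuous_deriv le_rfl
  have hw_cont : Continuous (deriv G) := hw.continuous
  have hh_cont : Continuous h := hh.continuous
  refine integral_Ioi_eq_zero_of_hasDerivAt (by fun_prop) (by simp)
    (fun r hr => hs.hasDerivAt_boundaryTerm hf hG (hh.differentiable one_ne_zero) hr) ?_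
    (.intro hc.isCompact fun r hr => ?_) (.intro hc.isCompact fun r hr => ?_)
  · unfold radialDefect
    fun_prop (disch := intro r; positivity)
  · simp [image_eq_zero_of_notMem_tsupport hr]
  · simp [radialDefect, (hasDerivAt_mul_deriv_mul hG (hh.differentiable one_ne_zero) r).deriv,
      image_eq_zero_of_notMem_tsupport hr,
      image_eq_zero_of_notMem_tsupport fun hr' => hr (tsupport_deriv_subset hr')]

end HardyIdentity

section HardyInequality

variable {n : ℕ} {f : ℝ → ℝ} {u H : Euc n → ℝ}

lemma continuous_hardyDensity (hu : ContDiff ℝ 1 u) (hH : ContDiff ℝ 1 H) :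
    Continuous (hardyDensity u H) := by
  have hgrad := continuous_gradient hu
  have heuler : Continuous (eulerDeriv H) := (contDiff_eulerDeriv hH (zero_add 1).le).continuous
  have hH_cont := hH.continuous
  unfold hardyDensity
  fun_prop (disch := intro x; positivity)

lemma hasCompactSupport_hardyDensity (hc : HasCompactSupport H) :
    HasCompactSupport (hardyDensity u H) :=
  .intro hc.isCompact fun x hx => by
    simp [hardyDensity, image_eq_zero_of_notMem_tsupport hx,
      eulerDeriv_eq_zero_of_notMem_tsupport hx]

lemma integrable_hardyDensity (hu : ContDiff ℝ 1 u) (hH : ContDiff ℝ 1 H)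
    (hc : HasCompactSupport H) : Integrable (hardyDensity u H) :=
  (continuous_hardyDensity hu hH).integrable_of_hasCompactSupport
    (hasCompactSupport_hardyDensity hc)

lemma secondVariation_sub_hardyDensity_eq_radialDefect {G h : ℝ → ℝ} (hG : ContDiff ℝ 2 G)
    (hh : Differentiable ℝ h) (hu : u = fun x => G ‖x‖) (hH : H = fun x => h ‖x‖) {x : Euc n}
    (hx : x ≠ 0) :
    areaHessian (gradient u x) (gradient (fun y => eulerDeriv u y * H y) x) -
      deriv f (u x) * (eulerDeriv u x * H x) ^ 2 - hardyDensity u H x =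
      radialDefect n f G h ‖x‖ := by
  have hdG : Differentiable ℝ G := hG.differentiable two_ne_zero
  subst hu hH
  simp only [hardyDensity, radialDefect, eulerDeriv_comp_norm (hdG _), eulerDeriv_comp_norm (hh _),
    (hasDerivAt_mul_deriv_mul hG hh _).deriv,
    areaHessian_gradient_comp_norm hx (hdG _).hasDerivAt (hasDerivAt_mul_deriv_mul hG hh _),
    norm_sq_gradient_comp_norm hx (hdG _).hasDerivAt]

lemma IsWeakSolution.integral_secondVariation_sub_hardyDensity_eq_zero [NeZero n] {g h : ℝ → ℝ}
    (hs : IsWeakSolution Set.univ f u) (hf : ContDiff ℝ 1 f) (hu : ContDiff ℝ 2 u)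
    (hug : ∀ x, u x = g ‖x‖) (hH : ContDiff ℝ 1 H) (hc : HasCompactSupport H)
    (hHh : ∀ x, H x = h ‖x‖) :
    ∫ x, (areaHessian (gradient u x) (gradient (fun y => eulerDeriv u y * H y) x) -
      deriv f (u x) * (eulerDeriv u x * H x) ^ 2 - hardyDensity u H x) = 0 := by
  obtain ⟨G, hG, -, huG⟩ := exists_contDiff_eq_comp_norm hu hug
  obtain ⟨P, hP, hP_supp, hHP⟩ := exists_contDiff_eq_comp_norm hH hHh
  have hs' : IsWeakSolution Set.univ f fun x : Euc n => G ‖x‖ := huG ▸ hs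
  have hdP : Differentiable ℝ P := hP.differentiable one_ne_zero
  rw [integral_eq_of_eq_comp_norm volume fun x hx =>
      secondVariation_sub_hardyDensity_eq_radialDefect hG hdP huG hHP hx,
    finrank_euclideanSpace_fin, hs'.integral_radialDefect_eq_zero hf hG hP (hP_supp hc), mul_zero]

lemma IsStableSolution.integral_hardyDensity_nonneg [NeZero n] {g h : ℝ → ℝ}
    (hs : IsStableSolution Set.univ f u) (hf : ContDiff ℝ 1 f) (hu : ContDiff ℝ 2 u)
    (hug : ∀ x, u x = g ‖x‖) (hH : ContDiff ℝ 1 H) (hc : HasCompactSupport H)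
    (hHh : ∀ x, H x = h ‖x‖) : 0 ≤ ∫ x, hardyDensity u H x := by
  have hu1 : ContDiff ℝ 1 u := hu.of_le one_le_two
  have hξ : ContDiff ℝ 1 fun x => eulerDeriv u x * H x :=
    (contDiff_eulerDeriv hu one_add_one_eq_two.le).mul hH
  have hξ_supp : HasCompactSupport fun x => eulerDeriv u x * H x := hc.mul_left
  have stability := hs.le_of_contDiff_one isOpen_univ hξ hξ_supp (Set.subset_univ _)
  have identity :=
    hs.1.integral_secondVariation_sub_hardyDensity_eq_zero hf hu hug hH hc hHh
  have int_hessian : Integrable fun x =>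
      areaHessian (gradient u x) (gradient (fun y => eulerDeriv u y * H y) x) := by
    refine (continuous_areaHessian.comp ((continuous_gradient hu1).prodMk
      (continuous_gradient hξ))).integrable_of_hasCompactSupport
      (.intro hξ_supp.isCompact fun x hx => ?_)
    rw [Function.comp_apply, gradient_eq_zero_of_notMem_tsupport hx, areaHessian_zero_right]
  have int_potential : Integrable fun x => deriv f (u x) * (eulerDeriv u x * H x) ^ 2 := by
    have hdf : Continuous fun x => deriv f (u x) :=
      (hf.continuous_deriv le_rfl).comp hu.continuous
    refine (hdf.mul (hξ.continuous.pow 2)).integrable_of_hasCompactSupport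
      (.intro hc.isCompact fun x hx => ?_)
    simp [image_eq_zero_of_notMem_tsupport hx]
  have int_diff : Integrable fun x =>
      areaHessian (gradient u x) (gradient (fun y => eulerDeriv u y * H y) x) -
        deriv f (u x) * (eulerDeriv u x * H x) ^ 2 := int_hessian.sub int_potential
  rw [integral_sub int_diff (integrable_hardyDensity hu1 hH hc),
    integral_sub int_hessian int_potential] at identity
  rw [setIntegral_univ, setIntegral_univ] at stability
  linarith

end HardyInequality

section Weight

/-- The cutoff `χ` on the line, equal to `1` on `[-1, 1]` and to `0` off `(-2, 2)`; it is applied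
to `‖x‖² / R²`. -/
def lineCutoff : ContDiffBump (0 : ℝ) := ⟨1, 2, one_pos, one_lt_two⟩

lemma lineCutoff_eq_one {s : ℝ} (hs0 : 0 ≤ s) (hs : s ≤ 1) : lineCutoff s = 1 :=
  lineCutoff.one_of_mem_closedBall <| by
    rw [mem_closedBall_zero_iff, Real.norm_of_nonneg hs0]
    exact hs

lemma lineCutoff_eq_zero {s : ℝ} (hs : 2 ≤ s) : lineCutoff s = 0 :=
  lineCutoff.zero_of_le_dist <| by
    rw [dist_zero_right]
    exact hs.trans (le_abs_self s)

lemma deriv_lineCutoff_eq_zero {s : ℝ} (hs0 : 0 ≤ s) (hs : s < 1 ∨ 2 < s) :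
    deriv lineCutoff s = 0 := by
  rcases hs with hs | hs
  · have hmem : s ∈ ball (0 : ℝ) lineCutoff.rIn := by
      rw [mem_ball_zero_iff, Real.norm_of_nonneg hs0]
      exact hs
    rw [(lineCutoff.eventuallyEq_one_of_mem_ball hmem).deriv_eq]
    exact deriv_const s (1 : ℝ)
  · refine deriv_of_notMem_tsupport fun hmem => ?_
    rw [lineCutoff.tsupport_eq, mem_closedBall_zero_iff, Real.norm_of_nonneg hs0] at hmem
    exact hs.not_ge hmem

lemma exists_abs_mul_deriv_lineCutoff_le : ∃ M, ∀ s, |2 * s * deriv lineCutoff s| ≤ M :=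
  ((continuous_const.mul continuous_id).mul
    (lineCutoff.contDiff.continuous_deriv_one)).bounded_above_of_compact_support
      lineCutoff.hasCompactSupport.deriv.mul_left

lemma abs_one_sub_mul_div_le {a p q : ℝ} (ha : 2 ≤ a) (hp : 0 ≤ p) (hq : 0 ≤ q) :
    |1 - a * (q / (p + q))| ≤ a - 1 := by
  have hle : q / (p + q) ≤ 1 := div_le_one_of_le₀ (le_add_of_nonneg_left hp) (by positivity)
  have hnonneg : 0 ≤ q / (p + q) := by positivity
  rw [abs_le]
  constructor <;> nlinarith

variable {E : Type*} [NormedAddCommGroup E] {a ρ R : ℝ} {x : E}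

/-- The radial weight `H = (ρ² + |x|²)^(-a/2) χ(|x|²/R²)` inserted in the Hardy inequality. -/
def hardyWeight (a ρ R : ℝ) (x : E) : ℝ :=
  (ρ ^ 2 + ‖x‖ ^ 2) ^ (-(a / 2)) * lineCutoff (‖x‖ ^ 2 / R ^ 2)

lemma hasCompactSupport_hardyWeight [ProperSpace E] (hR : R ≠ 0) :
    HasCompactSupport (hardyWeight a ρ R : E → ℝ) := by
  refine .intro (isCompact_closedBall 0 (2 * |R|)) fun x hx => ?_
  rw [mem_closedBall_zero_iff, not_le] at hx
  have hfar : 4 ≤ ‖x‖ ^ 2 / R ^ 2 := by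
    rw [le_div_iff₀ (by positivity), ← sq_abs R]
    nlinarith [abs_nonneg R]
  rw [hardyWeight, lineCutoff_eq_zero (by linarith), mul_zero]

lemma sq_hardyWeight (x : E) :
    hardyWeight a ρ R x ^ 2 =
      (ρ ^ 2 + ‖x‖ ^ 2) ^ (-a) * lineCutoff (‖x‖ ^ 2 / R ^ 2) ^ 2 := by
  rw [hardyWeight, mul_pow, ← Real.rpow_mul_natCast (by positivity)]
  ring_nf

lemma two_mul_sq_rpow_neg_le_sq_hardyWeight (ha : 0 ≤ a) (hρ : 0 < ρ) (hρR : ρ ≤ R)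
    (hx : ‖x‖ ≤ ρ) : (2 * ρ ^ 2) ^ (-a) ≤ hardyWeight a ρ R x ^ 2 := by
  have hsq : ‖x‖ ^ 2 ≤ ρ ^ 2 := by gcongr
  have hnear : ‖x‖ ^ 2 / R ^ 2 ≤ 1 :=
    div_le_one_of_le₀ (by gcongr; exact hx.trans hρR) (sq_nonneg R)
  rw [sq_hardyWeight, lineCutoff_eq_one (by positivity) hnear, one_pow, mul_one]
  exact Real.rpow_le_rpow_of_nonpos (by positivity) (by linarith) (neg_nonpos.mpr ha)

variable [InnerProductSpace ℝ E]

lemma contDiff_hardyWeight (hρ : ρ ≠ 0) {k : ℕ∞} :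
    ContDiff ℝ k (hardyWeight a ρ R : E → ℝ) := by
  unfold hardyWeight
  refine ((contDiff_const.add (contDiff_norm_sq ℝ)).rpow_const_of_ne fun x => ?_).mul
    (lineCutoff.contDiff.comp ((contDiff_norm_sq ℝ).div_const _))
  positivity

lemma hardyWeight_add_eulerDeriv (hρ : ρ ≠ 0) (x : E) :
    hardyWeight a ρ R x + eulerDeriv (hardyWeight a ρ R) x =
      (ρ ^ 2 + ‖x‖ ^ 2) ^ (-(a / 2)) *
        ((1 - a * (‖x‖ ^ 2 / (ρ ^ 2 + ‖x‖ ^ 2))) * lineCutoff (‖x‖ ^ 2 / R ^ 2) +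
          2 * (‖x‖ ^ 2 / R ^ 2) * deriv lineCutoff (‖x‖ ^ 2 / R ^ 2)) := by
  have hpos : 0 < ρ ^ 2 + ‖x‖ ^ 2 := by positivity
  have hcutoff : HasDerivAt (fun t => lineCutoff (t / R ^ 2))
      (deriv lineCutoff (‖x‖ ^ 2 / R ^ 2) * (1 / R ^ 2)) (‖x‖ ^ 2) :=
    (((lineCutoff.contDiff (n := 1)).differentiable one_ne_zero) _).hasDerivAt.comp
      (h₂ := lineCutoff) (‖x‖ ^ 2) ((hasDerivAt_id _).div_const _)
  have hprofile := (((hasDerivAt_id (‖x‖ ^ 2)).const_add (ρ ^ 2)).rpow_const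
    (p := -(a / 2)) (.inl hpos.ne')).mul hcutoff
  have heuler : eulerDeriv (hardyWeight a ρ R) x = _ := eulerDeriv_comp_norm_sq hprofile
  rw [heuler, hardyWeight, id, Real.rpow_sub_one hpos.ne']
  field_simp
  ring

lemma sq_hardyWeight_add_eulerDeriv_le (ha : 2 ≤ a) (hρ : ρ ≠ 0) (hR : 0 < R)
    (hx : x ∉ ball (0 : E) (2 * R) \ ball 0 R) :
    (hardyWeight a ρ R x + eulerDeriv (hardyWeight a ρ R) x) ^ 2 ≤
      (a - 1) ^ 2 * hardyWeight a ρ R x ^ 2 := by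
  have hderiv : deriv lineCutoff (‖x‖ ^ 2 / R ^ 2) = 0 := by
    refine deriv_lineCutoff_eq_zero (by positivity) ?_
    rw [div_lt_one (by positivity), lt_div_iff₀ (by positivity)]
    simp only [Set.mem_sdiff, mem_ball_zero_iff, not_and, not_not] at hx
    rcases lt_or_ge ‖x‖ (2 * R) with hlt | hge
    · exact .inl (by gcongr; exact hx hlt)
    · exact .inr (by nlinarith)
  have hslope := abs_one_sub_mul_div_le ha (sq_nonneg ρ) (sq_nonneg ‖x‖)
  rw [hardyWeight_add_eulerDeriv hρ, hderiv, mul_zero, add_zero, mul_left_comm, mul_pow]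
  exact mul_le_mul_of_nonneg_right (sq_le_sq' (neg_le_of_abs_le hslope) (le_of_abs_le hslope))
    (sq_nonneg _)

lemma sq_hardyWeight_add_eulerDeriv_le_rpow {M : ℝ}
    (hM : ∀ s, |2 * s * deriv lineCutoff s| ≤ M) (ha : 2 ≤ a) (hρ : ρ ≠ 0) (hR : 0 < R)
    (hx : R ≤ ‖x‖) :
    (hardyWeight a ρ R x + eulerDeriv (hardyWeight a ρ R) x) ^ 2 ≤
      (a - 1 + M) ^ 2 * (R ^ 2) ^ (-a) := by
  have hfactor : |(1 - a * (‖x‖ ^ 2 / (ρ ^ 2 + ‖x‖ ^ 2))) * lineCutoff (‖x‖ ^ 2 / R ^ 2) +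
      2 * (‖x‖ ^ 2 / R ^ 2) * deriv lineCutoff (‖x‖ ^ 2 / R ^ 2)| ≤ a - 1 + M := by
    refine (abs_add_le _ _).trans (add_le_add ?_ (hM _))
    rw [abs_mul, abs_of_nonneg lineCutoff.nonneg]
    exact (mul_le_of_le_one_right (abs_nonneg _) lineCutoff.le_one).trans
      (abs_one_sub_mul_div_le ha (sq_nonneg ρ) (sq_nonneg ‖x‖))
  have hpower : ((ρ ^ 2 + ‖x‖ ^ 2) ^ (-(a / 2))) ^ 2 ≤ (R ^ 2) ^ (-a) := by
    rw [← Real.rpow_mul_natCast (by positivity), Nat.cast_ofNat, neg_mul,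
      div_mul_cancel₀ a two_ne_zero]
    exact Real.rpow_le_rpow_of_nonpos (by positivity)
      (le_add_of_nonneg_of_le (sq_nonneg ρ) (by gcongr)) (by linarith)
  rw [hardyWeight_add_eulerDeriv hρ, mul_pow, mul_comm]
  exact mul_le_mul (sq_le_sq.mpr (hfactor.trans (le_abs_self _))) hpower (sq_nonneg _) (sq_nonneg _)

end Weight

section WeightedInequality

variable {n : ℕ} {f : ℝ → ℝ} {u H : Euc n → ℝ} {x : Euc n} {c D : ℝ}

lemma hardyDensity_eq (u H : Euc n → ℝ) (x : Euc n) :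
    hardyDensity u H x =
      ‖gradient u x‖ ^ 2 / (1 + ‖gradient u x‖ ^ 2) ^ ((3 : ℝ) / 2) *
        ((H x + eulerDeriv H x) ^ 2 - (n - 1) * H x ^ 2) -
      (n - 1) * H x ^ 2 *
        ((‖gradient u x‖ ^ 2) ^ 2 / (1 + ‖gradient u x‖ ^ 2) ^ ((3 : ℝ) / 2)) := by
  rw [hardyDensity, rpow_three_halves (by positivity)]
  ring

lemma hardyDensity_le_indicator_sub_indicator [NeZero n] {A B : Set (Euc n)} (hAB : Disjoint A B)
    (hoff : x ∉ A → (H x + eulerDeriv H x) ^ 2 ≤ (n - 1) * H x ^ 2)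
    (hA : x ∈ A → (H x + eulerDeriv H x) ^ 2 ≤ D) (hB : x ∈ B → c ≤ H x ^ 2) :
    hardyDensity u H x ≤
      A.indicator (fun x => D *
        (‖gradient u x‖ ^ 2 / (1 + ‖gradient u x‖ ^ 2) ^ ((3 : ℝ) / 2))) x -
      B.indicator (fun x => (n - 1) * c *
        ((‖gradient u x‖ ^ 2) ^ 2 / (1 + ‖gradient u x‖ ^ 2) ^ ((3 : ℝ) / 2))) x := by
  rw [hardyDensity_eq]
  have hn : (0 : ℝ) ≤ n - 1 := sub_nonneg.mpr (Nat.one_le_cast.mpr NeZero.one_le)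
  set p := ‖gradient u x‖ ^ 2 / (1 + ‖gradient u x‖ ^ 2) ^ ((3 : ℝ) / 2) with hp_def
  set q := (‖gradient u x‖ ^ 2) ^ 2 / (1 + ‖gradient u x‖ ^ 2) ^ ((3 : ℝ) / 2) with hq_def
  have hp : 0 ≤ p := by positivity
  have hq : 0 ≤ q := by positivity
  have hHq : 0 ≤ (n - 1) * H x ^ 2 * q := mul_nonneg (by positivity) hq
  by_cases hxA : x ∈ A
  · rw [Set.indicator_of_mem hxA, Set.indicator_of_notMem (hAB.notMem_of_mem_left hxA), ← hp_def]
    have hHp : 0 ≤ (n - 1) * H x ^ 2 * p := by positivity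
    linarith [mul_le_mul_of_nonneg_right (hA hxA) hp]
  · have hle : p * ((H x + eulerDeriv H x) ^ 2 - (n - 1) * H x ^ 2) ≤ 0 :=
      mul_nonpos_of_nonneg_of_nonpos hp (sub_nonpos.mpr (hoff hxA))
    rw [Set.indicator_of_notMem hxA]
    by_cases hxB : x ∈ B
    · rw [Set.indicator_of_mem hxB, ← hq_def]
      have hcH : (n - 1) * c * q ≤ (n - 1) * H x ^ 2 * q := by gcongr; exact hB hxB
      linarith
    · rw [Set.indicator_of_notMem hxB]
      linarith

lemma integrableOn_norm_gradient_sq_pow_div (hu : ContDiff ℝ 1 u) (k : ℕ) {A : Set (Euc n)}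
    (hA : IsBounded A) :
    IntegrableOn (fun x =>
      (‖gradient u x‖ ^ 2) ^ k / (1 + ‖gradient u x‖ ^ 2) ^ ((3 : ℝ) / 2)) A := by
  have hnum : Continuous fun x => ‖gradient u x‖ ^ 2 := (continuous_gradient hu).norm.pow 2
  have hcont : Continuous fun x =>
      (‖gradient u x‖ ^ 2) ^ k / (1 + ‖gradient u x‖ ^ 2) ^ ((3 : ℝ) / 2) :=
    (hnum.pow k).div ((continuous_const.add hnum).rpow_const fun _ => .inr (by norm_num))
      fun _ => by positivity
  exact (hcont.continuousOn.integrableOn_compact hA.isCompact_closure).mono_set subset_closure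

lemma IsStableSolution.setIntegral_le_setIntegral_of_radial_weight [NeZero n] {g h : ℝ → ℝ}
    {A B : Set (Euc n)} (hs : IsStableSolution Set.univ f u) (hf : ContDiff ℝ 1 f)
    (hu : ContDiff ℝ 2 u) (hug : ∀ x, u x = g ‖x‖) (hH : ContDiff ℝ 1 H) (hc : HasCompactSupport H)
    (hHh : ∀ x, H x = h ‖x‖) (hA_meas : MeasurableSet A) (hA_bdd : IsBounded A)
    (hB_meas : MeasurableSet B) (hB_bdd : IsBounded B) (hAB : Disjoint A B)
    (hoff : ∀ x ∉ A, (H x + eulerDeriv H x) ^ 2 ≤ (n - 1) * H x ^ 2)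
    (hA : ∀ x ∈ A, (H x + eulerDeriv H x) ^ 2 ≤ D) (hB : ∀ x ∈ B, c ≤ H x ^ 2) :
    (n - 1) * c * ∫ x in B,
        (‖gradient u x‖ ^ 2) ^ 2 / (1 + ‖gradient u x‖ ^ 2) ^ ((3 : ℝ) / 2) ≤
      D * ∫ x in A, ‖gradient u x‖ ^ 2 / (1 + ‖gradient u x‖ ^ 2) ^ ((3 : ℝ) / 2) := by
  have hu1 : ContDiff ℝ 1 u := hu.of_le one_le_two
  have int_A := (integrableOn_norm_gradient_sq_pow_div hu1 1 hA_bdd).const_mul D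
  have int_B := (integrableOn_norm_gradient_sq_pow_div hu1 2 hB_bdd).const_mul ((n - 1) * c)
  simp only [pow_one] at int_A
  replace int_A := IntegrableOn.integrable_indicator int_A hA_meas
  replace int_B := IntegrableOn.integrable_indicator int_B hB_meas
  have hle := (hs.integral_hardyDensity_nonneg hf hu hug hH hc hHh).trans <|
    integral_mono (integrable_hardyDensity hu1 hH hc) (int_A.sub int_B) fun x =>
      hardyDensity_le_indicator_sub_indicator hAB (hoff x) (hA x) (hB x)
  rw [integral_sub' int_A int_B, integral_indicator hA_meas, integral_indicator hB_meas,
    integral_const_mul, integral_const_mul, sub_nonneg] at hle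
  exact hle

lemma IsStableSolution.setIntegral_ball_le_setIntegral_annulus [NeZero n] {g : ℝ → ℝ}
    {a M ρ R : ℝ} (hs : IsStableSolution Set.univ f u) (hf : ContDiff ℝ 1 f)
    (hu : ContDiff ℝ 2 u) (hug : ∀ x, u x = g ‖x‖)
    (hM : ∀ s, |2 * s * deriv lineCutoff s| ≤ M) (ha : 2 ≤ a) (han : (a - 1) ^ 2 ≤ n - 1)
    (hρ : 0 < ρ) (hρR : ρ ≤ R) :
    (n - 1) * (2 * ρ ^ 2) ^ (-a) * ∫ x in ball (0 : Euc n) ρ,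
        (‖gradient u x‖ ^ 2) ^ 2 / (1 + ‖gradient u x‖ ^ 2) ^ ((3 : ℝ) / 2) ≤
      (a - 1 + M) ^ 2 * (R ^ 2) ^ (-a) * ∫ x in ball (0 : Euc n) (2 * R) \ ball 0 R,
        ‖gradient u x‖ ^ 2 / (1 + ‖gradient u x‖ ^ 2) ^ ((3 : ℝ) / 2) := by
  have hR : 0 < R := hρ.trans_le hρR
  refine hs.setIntegral_le_setIntegral_of_radial_weight hf hu hug
    (contDiff_hardyWeight hρ.ne' (a := a) (R := R)) (hasCompactSupport_hardyWeight hR.ne')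
    (h := fun r => (ρ ^ 2 + r ^ 2) ^ (-(a / 2)) * lineCutoff (r ^ 2 / R ^ 2)) (fun _ => rfl)
    (measurableSet_ball.diff measurableSet_ball) (isBounded_ball.subset Set.sdiff_subset)
    measurableSet_ball isBounded_ball
    (Set.disjoint_left.mpr fun x hx hxρ => hx.2 (ball_subset_ball hρR hxρ))
    (fun x hx => ?_) (fun x hx => ?_) fun x hx => ?_
  · exact (sq_hardyWeight_add_eulerDeriv_le ha hρ.ne' hR hx).trans (by gcongr)
  · exact sq_hardyWeight_add_eulerDeriv_le_rpow hM ha hρ.ne' hR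
      (not_lt.mp fun hlt => hx.2 (mem_ball_zero_iff.mpr hlt))
  · exact two_mul_sq_rpow_neg_le_sq_hardyWeight (by linarith) hρ hρR (mem_ball_zero_iff.mp hx).le

end WeightedInequality

theorem stmt_19_general (n : ℕ) (hn : 2 ≤ n) :
    ∃ C > (0:ℝ), ∀ (f : ℝ → ℝ) (u : Euc n → ℝ) (g : ℝ → ℝ),
      ContDiff ℝ 1 f →
      ContDiff ℝ 2 u →
      IsStableSolution (Set.univ : Set (Euc n)) f u →
      (∀ x : Euc n, u x = g ‖x‖) →
      ∀ ρ R : ℝ, 0 < ρ → ρ < R →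
        1 / ρ ^ (2 * (Real.sqrt ((n:ℝ) - 1) + 1)) *
            ∫ x in ball (0 : Euc n) ρ,
              (‖gradient u x‖ ^ 2) ^ 2 / (1 + ‖gradient u x‖ ^ 2) ^ ((3:ℝ)/2)
          ≤ C / R ^ (2 * (Real.sqrt ((n:ℝ) - 1) + 1)) *
            ∫ x in ball (0 : Euc n) (2*R) \ ball (0 : Euc n) R,
              ‖gradient u x‖ ^ 2 / (1 + ‖gradient u x‖ ^ 2) ^ ((3:ℝ)/2) := by
  obtain ⟨M, hM⟩ := exists_abs_mul_deriv_lineCutoff_le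
  have hM_nonneg : 0 ≤ M := (abs_nonneg _).trans (hM 0)
  have : NeZero n := ⟨by omega⟩
  have hn_one : (1 : ℝ) ≤ n - 1 := by
    have : (2 : ℝ) ≤ n := by exact_mod_cast hn
    linarith
  set a : ℝ := √(n - 1) + 1 with ha_def
  have ha : 2 ≤ a := by linarith [Real.one_le_sqrt.mpr hn_one]
  have ha_sq : (a - 1) ^ 2 = n - 1 := by
    rw [ha_def, add_sub_cancel_right, Real.sq_sqrt (by linarith)]
  have hconst : 0 < (n - 1 : ℝ) * 2 ^ (-a) := by positivity
  refine ⟨(a - 1 + M) ^ 2 / ((n - 1) * 2 ^ (-a)),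
    div_pos (pow_pos (by linarith) 2) hconst, fun f u g hf hu hs hug ρ R hρ hρR => ?_⟩
  have estimate :=
    hs.setIntegral_ball_le_setIntegral_annulus hf hu hug hM ha ha_sq.le hρ hρR.le
  rw [Real.mul_rpow zero_le_two (sq_nonneg ρ), sq_rpow_neg hρ.le,
    sq_rpow_neg (hρ.trans hρR).le] at estimate
  refine le_of_mul_le_mul_left (estimate.trans_eq' ?_ |>.trans_eq ?_) hconst
  · ring
  · field_simp

/-- **Key global estimate in the radial case.**
Let `n ≥ 2` and set `a = √(n-1)+1`.  If `u` is a `W^{3,1}_loc(ℝⁿ)` stable solution of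
`div(∇u/√(1+|∇u|²)) = -f(u)` in `ℝⁿ` (`f ∈ C¹(ℝ)`), radially symmetric with respect to
the origin, and `z = |∇u|²`, then there is a dimensional constant `C > 0` such that
`(1/ρ^{2a}) ∫_{B_ρ} z²/(1+z)^{3/2} ≤ (C/R^{2a}) ∫_{B_{2R}∖B_R} z/(1+z)^{3/2}`
for all `0 < ρ < R`. -/
theorem stmt_19 (n : ℕ) (hn : 2 ≤ n) :
    ∃ C > (0:ℝ), ∀ (f : ℝ → ℝ) (u : Euc n → ℝ) (g : ℝ → ℝ),
      ContDiff ℝ 1 f →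
      ContDiff ℝ 3 u →
      IsStableSolution (Set.univ : Set (Euc n)) f u →
      (∀ x : Euc n, u x = g ‖x‖) →
      ∀ ρ R : ℝ, 0 < ρ → ρ < R →
        1 / ρ ^ (2 * (Real.sqrt ((n:ℝ) - 1) + 1)) *
            ∫ x in ball (0 : Euc n) ρ,
              (‖gradient u x‖ ^ 2) ^ 2 / (1 + ‖gradient u x‖ ^ 2) ^ ((3:ℝ)/2)
          ≤ C / R ^ (2 * (Real.sqrt ((n:ℝ) - 1) + 1)) *
            ∫ x in ball (0 : Euc n) (2*R) \ ball (0 : Euc n) R,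
              ‖gradient u x‖ ^ 2 / (1 + ‖gradient u x‖ ^ 2) ^ ((3:ℝ)/2) := by
  obtain ⟨C, hC, estimate⟩ := stmt_19_general n hn
  exact ⟨C, hC, fun f u g hf hu => estimate f u g hf (hu.of_le (by norm_num))⟩
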